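/- arXiv:2203.15091 — 3 statements merged into one kernel-verified Lean document; each statement's English description precedes it below -/
import Mathlib

section
/- Let v, w ∈ [0,1]. Then 𝒬(w,v) ≤ 0 for every boundary entropy flux pair (ℱ,𝒬) if and only if w ∈ {v} ∪ [1 − min{1/2, v}, 1]. (This is the pointwise characterisation of the left boundary condition in Proposition 2.4.) -/
open Set

/-- A Lax entropy flux pair for the flux `J u = u * (1 - u)`:
`F`, `Q` are twice continuously differentiable with `Q' = (1 - 2u) F'`
and `F'' ≥ 0` on `[0,1]`. -/
def IsLaxPair (F Q : ℝ → ℝ) : Prop :=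
  ContDiff ℝ 2 F ∧ ContDiff ℝ 2 Q ∧
  (∀ u ∈ Set.Icc (0:ℝ) 1, deriv Q u = (1 - 2*u) * deriv F u) ∧
  (∀ u ∈ Set.Icc (0:ℝ) 1, 0 ≤ deriv (deriv F) u)

/-- A boundary entropy flux pair: for each `v ∈ [0,1]`, `(F ·  v, Q · v)` is a
Lax entropy flux pair and `F v v = ∂_u F(u,v)|_{u=v} = Q v v = 0`. -/
def IsBoundaryPair (F Q : ℝ → ℝ → ℝ) : Prop :=
  ∀ v ∈ Set.Icc (0:ℝ) 1,
    IsLaxPair (fun u => F u v) (fun u => Q u v) ∧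
    F v v = 0 ∧ deriv (fun u => F u v) v = 0 ∧ Q v v = 0

/-!
For an entropy flux pair `(F, Q)` with `F' v = 0` and `Q v = 0`, integrating `Q' = J' F'` by parts
gives `Q w = ∫ k in v..w, (J w - J k) * F'' k`. Every nonnegative continuous function occurs as
`F''`, so `Q w ≤ 0` holds for all pairs if and only if `(w - v) * (J w - J k) ≤ 0` for every `k`
between `v` and `w`. Since `J w - J k = (w - k) * (1 - w - k)`, this is an elementary condition
on `v` and `w`.
-/

open intervalIntegral MeasureTheory

section OrientedIntegral

variable {a b : ℝ} {f : ℝ → ℝ}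

lemma integral_nonpos_of_sub_mul_nonpos (h : ∀ x ∈ uIcc a b, (b - a) * f x ≤ 0) :
    ∫ x in a..b, f x ≤ 0 := by
  rcases lt_trichotomy a b with hab | rfl | hba
  · rw [← neg_nonneg, ← intervalIntegral.integral_neg]
    refine integral_nonneg hab.le fun x hx ↦ neg_nonneg.2 ?_
    exact nonpos_of_mul_nonpos_right (h x (Icc_subset_uIcc hx)) (sub_pos.2 hab)
  · simp only [integral_same, le_refl]
  · rw [integral_symm, neg_nonpos]
    refine integral_nonneg hba.le fun x hx ↦ ?_
    exact nonneg_of_mul_nonpos_right (h x (Icc_subset_uIcc' hx)) (sub_neg.2 hba)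

lemma integral_pos_of_sub_mul_nonneg (hf : ContinuousOn f (uIcc a b))
    (h : ∀ x ∈ uIcc a b, 0 ≤ (b - a) * f x) (hpos : ∃ c ∈ uIcc a b, 0 < (b - a) * f c) :
    0 < ∫ x in a..b, f x := by
  obtain ⟨c, hc, hfc⟩ := hpos
  rcases lt_trichotomy a b with hab | rfl | hba
  · rw [uIcc_of_le hab.le] at hf h hc
    have hba' : 0 < b - a := sub_pos.2 hab
    exact integral_pos hab hf
      (fun x hx ↦ nonneg_of_mul_nonneg_right (h x (Ioc_subset_Icc_self hx)) hba')
      ⟨c, hc, pos_of_mul_pos_right hfc hba'.le⟩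
  · simp only [sub_self, zero_mul, lt_self_iff_false] at hfc
  · rw [uIcc_of_ge hba.le] at hf h hc
    have hba' : b - a < 0 := sub_neg.2 hba
    rw [integral_symm, ← intervalIntegral.integral_neg]
    exact integral_pos hba hf.neg
      (fun x hx ↦ by nlinarith [h x (Ioc_subset_Icc_self hx), hba'])
      ⟨c, hc, by nlinarith [hba']⟩

lemma sub_mul_nonpos_of_forall_integral_mul_nonpos (hf : Continuous f)
    (h : ∀ g : ℝ → ℝ, Continuous g → (∀ x, 0 ≤ g x) → ∫ x in a..b, f x * g x ≤ 0) :
    ∀ x ∈ uIcc a b, (b - a) * f x ≤ 0 := by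
  by_contra! ⟨c, hc, hfc⟩
  let g : ℝ → ℝ := fun x ↦ max 0 ((b - a) * f x)
  have hg : Continuous g := by fun_prop
  have hfg : ∀ x, (b - a) * (f x * g x) = g x ^ 2 := by
    intro x
    rcases le_total ((b - a) * f x) 0 with hx | hx
    · simp only [g, max_eq_left hx, mul_zero, zero_pow two_ne_zero]
    · simp only [g, max_eq_right hx]
      ring
  refine (h g hg fun x ↦ le_max_left _ _).not_gt
    (integral_pos_of_sub_mul_nonneg (hf.mul hg).continuousOn (fun x _ ↦ ?_) ⟨c, hc, ?_⟩)
  · exact (hfg x).symm ▸ sq_nonneg (g x)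
  · exact (hfg c).symm ▸ pow_pos (lt_max_of_lt_right hfc) 2

end OrientedIntegral

lemma contDiff_add_one_integral {E : Type*} [NormedAddCommGroup E] [NormedSpace ℝ E]
    [CompleteSpace E] {f : ℝ → E} {n : ℕ∞} (hf : ContDiff ℝ n f) (a : ℝ) :
    ContDiff ℝ (n + 1) fun u ↦ ∫ x in a..u, f x := by
  rw [contDiff_succ_iff_deriv, funext (hf.continuous.deriv_integral f a)]
  exact ⟨differentiable_integral_of_continuous hf.continuous, by simp, hf⟩

lemma integral_deriv_mul_eq_integral_sub_mul_deriv {A : Type*} [NormedRing A] [NormedAlgebra ℝ A]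
    [CompleteSpace A] {a b : ℝ} {f f' g g' : ℝ → A}
    (hf : ∀ x ∈ uIcc a b, HasDerivAt f (f' x) x) (hg : ∀ x ∈ uIcc a b, HasDerivAt g (g' x) x)
    (hf' : IntervalIntegrable f' volume a b) (hg' : IntervalIntegrable g' volume a b)
    (hga : g a = 0) :
    ∫ x in a..b, f' x * g x = ∫ x in a..b, (f b - f x) * g' x := by
  have hparts := integral_mul_deriv_eq_deriv_mul
    (fun x hx ↦ (hf x hx).const_sub (f b)) hg hf'.neg hg'
  simp only [sub_self, zero_mul, hga, mul_zero, neg_mul, intervalIntegral.integral_neg,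
    sub_neg_eq_add, zero_add] at hparts
  exact hparts.symm

/-- The flux function `J` of the conservation law; `IsLaxPair` contains it through
`J' u = 1 - 2 * u`. -/
def quadraticFlux (u : ℝ) : ℝ := u * (1 - u)

lemma continuous_quadraticFlux : Continuous quadraticFlux := by
  unfold quadraticFlux
  fun_prop

lemma hasDerivAt_quadraticFlux (u : ℝ) : HasDerivAt quadraticFlux (1 - 2 * u) u := by
  refine ((hasDerivAt_id' u).mul ((hasDerivAt_id' u).const_sub 1)).congr_deriv ?_
  ring

lemma IsLaxPair.flux_sub_eq_integral {F Q : ℝ → ℝ} (h : IsLaxPair F Q) {a b : ℝ}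
    (ha : a ∈ Icc (0 : ℝ) 1) (hb : b ∈ Icc (0 : ℝ) 1) (hFa : deriv F a = 0) :
    Q b - Q a = ∫ k in a..b, (quadraticFlux b - quadraticFlux k) * deriv (deriv F) k := by
  obtain ⟨hF, hQ, hQF, -⟩ := h
  have hF' : ContDiff ℝ 1 (deriv F) := hF.deriv'
  calc Q b - Q a = ∫ k in a..b, deriv Q k :=
        (integral_deriv_eq_sub (fun k _ ↦ (hQ.differentiable two_ne_zero) k)
          ((hQ.continuous_deriv one_le_two).intervalIntegrable a b)).symm
    _ = ∫ k in a..b, (1 - 2 * k) * deriv F k :=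
        integral_congr fun k hk ↦ hQF k (uIcc_subset_Icc ha hb hk)
    _ = _ := integral_deriv_mul_eq_integral_sub_mul_deriv
        (fun k _ ↦ hasDerivAt_quadraticFlux k)
        (fun k _ ↦ (hF'.differentiable one_ne_zero k).hasDerivAt)
        (Continuous.intervalIntegrable (by fun_prop) a b)
        ((hF'.continuous_deriv le_rfl).intervalIntegrable a b) hFa

lemma IsBoundaryPair.flux_eq_integral {F Q : ℝ → ℝ → ℝ} (h : IsBoundaryPair F Q) {v w : ℝ}
    (hv : v ∈ Icc (0 : ℝ) 1) (hw : w ∈ Icc (0 : ℝ) 1) :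
    Q w v = ∫ k in v..w, (quadraticFlux w - quadraticFlux k) * deriv (deriv (F · v)) k := by
  obtain ⟨hLax, -, hF', hQ⟩ := h v hv
  rw [← hLax.flux_sub_eq_integral hv hw hF', hQ, sub_zero]

/-- The boundary entropy whose second derivative in `u` is `g`, for every boundary value `v`. Both
integrals start at `v`, so that it vanishes to first order there. -/
noncomputable def boundaryEntropy (g : ℝ → ℝ) (u v : ℝ) : ℝ := ∫ s in v..u, ∫ r in v..s, g r

/-- The entropy flux paired with `boundaryEntropy g`, normalised to vanish at `u = v`. -/
noncomputable def boundaryEntropyFlux (g : ℝ → ℝ) (u v : ℝ) : ℝ :=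
  ∫ s in v..u, (1 - 2 * s) * ∫ r in v..s, g r

section BoundaryEntropy

variable {g : ℝ → ℝ}

lemma deriv_boundaryEntropy (hg : Continuous g) (v : ℝ) :
    deriv (boundaryEntropy g · v) = fun u ↦ ∫ r in v..u, g r :=
  funext fun u ↦ Continuous.deriv_integral _ (continuous_primitive hg.intervalIntegrable v) v u

lemma deriv_deriv_boundaryEntropy (hg : Continuous g) (v : ℝ) :
    deriv (deriv (boundaryEntropy g · v)) = g := by
  rw [deriv_boundaryEntropy hg]
  exact funext (hg.deriv_integral g v)

lemma isBoundaryPair_boundaryEntropy (hg : Continuous g) (hg_nonneg : ∀ x, 0 ≤ g x) :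
    IsBoundaryPair (boundaryEntropy g) (boundaryEntropyFlux g) := by
  intro v _
  have hF' : ContDiff ℝ 1 fun u ↦ ∫ r in v..u, g r :=
    contDiff_add_one_integral (n := 0) (contDiff_zero.2 hg) v
  have hQ' : ContDiff ℝ 1 fun u ↦ (1 - 2 * u) * ∫ r in v..u, g r := by fun_prop
  refine ⟨⟨contDiff_add_one_integral (n := 1) hF' v, contDiff_add_one_integral (n := 1) hQ' v,
    fun u _ ↦ ?_, fun u _ ↦ ?_⟩, integral_same, ?_, integral_same⟩
  · rw [deriv_boundaryEntropy hg]
    exact hQ'.continuous.deriv_integral _ v u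
  · rw [deriv_deriv_boundaryEntropy hg]
    exact hg_nonneg u
  · rw [deriv_boundaryEntropy hg]
    exact integral_same

end BoundaryEntropy

section BoundaryCondition

variable {v w : ℝ}

lemma forall_isBoundaryPair_flux_nonpos_iff (hv : v ∈ Icc (0 : ℝ) 1) (hw : w ∈ Icc (0 : ℝ) 1) :
    (∀ F Q : ℝ → ℝ → ℝ, IsBoundaryPair F Q → Q w v ≤ 0) ↔
      ∀ k ∈ uIcc v w, (w - v) * (quadraticFlux w - quadraticFlux k) ≤ 0 := by
  constructor
  · intro h
    refine sub_mul_nonpos_of_forall_integral_mul_nonpos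
      (continuous_const.sub continuous_quadraticFlux) fun g hg hg_nonneg ↦ ?_
    have hpair := isBoundaryPair_boundaryEntropy hg hg_nonneg
    have hQ := hpair.flux_eq_integral hv hw
    rw [deriv_deriv_boundaryEntropy hg] at hQ
    exact hQ ▸ h _ _ hpair
  · intro h F Q hFQ
    rw [hFQ.flux_eq_integral hv hw]
    refine integral_nonpos_of_sub_mul_nonpos fun k hk ↦ ?_
    rw [← mul_assoc]
    obtain ⟨⟨-, -, -, hF''⟩, -⟩ := hFQ v hv
    exact mul_nonpos_of_nonpos_of_nonneg (h k hk) (hF'' k (uIcc_subset_Icc hv hw hk))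

lemma forall_mem_uIcc_quadraticFlux_iff :
    (∀ k ∈ uIcc v w, (w - v) * (quadraticFlux w - quadraticFlux k) ≤ 0) ↔
      w = v ∨ 1 - min (1 / 2) v ≤ w := by
  have hfactor : ∀ k, (w - v) * (quadraticFlux w - quadraticFlux k) =
      (w - v) * (w - k) * (1 - w - k) := by
    intro k
    unfold quadraticFlux
    ring
  simp only [hfactor]
  constructor
  · intro h
    by_contra! ⟨hne, hlt⟩
    -- The point `k = min (1 / 2) v` of `uIcc v w` maximises `(w - v) * (J w - J k)`.
    rcases le_total v (1 / 2) with hv | hv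
    · rw [min_eq_right hv] at hlt
      have hpos : 0 < (w - v) * (w - v) := mul_self_pos.2 (sub_ne_zero.2 hne)
      exact (h v left_mem_uIcc).not_gt (mul_pos hpos (by linarith))
    · rw [min_eq_left hv] at hlt
      have hw : w < 1 / 2 := by linarith
      have hpos : 0 < (w - v) * (w - 1 / 2) :=
        mul_pos_of_neg_of_neg (by linarith) (by linarith)
      exact (h (1 / 2) (mem_uIcc.2 (.inr ⟨hw.le, hv⟩))).not_gt (mul_pos hpos (by linarith))
  · rintro (rfl | hle) k hk
    · simp only [sub_self, zero_mul, le_refl]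
    · have hw : 1 / 2 ≤ w := by linarith [min_le_left (1 / 2) v]
      have hk_ge : min (1 / 2) v ≤ k := by
        rcases mem_uIcc.1 hk with ⟨hvk, -⟩ | ⟨hwk, -⟩
        · exact (min_le_right _ _).trans hvk
        · exact (min_le_left _ _).trans (hw.trans hwk)
      have hnonneg : 0 ≤ (w - v) * (w - k) := by
        rcases mem_uIcc.1 hk with ⟨hvk, hkw⟩ | ⟨hwk, hkv⟩
        · exact mul_nonneg (by linarith) (by linarith)
        · exact mul_nonneg_of_nonpos_of_nonpos (by linarith) (by linarith)
      exact mul_nonpos_of_nonneg_of_nonpos hnonneg (by linarith)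

end BoundaryCondition

/-- Pointwise characterisation of the left boundary condition (Proposition 2.4):
`Q w v ≤ 0` for every boundary entropy flux pair iff
`w ∈ {v} ∪ [1 − min(1/2, v), 1]`. -/
theorem stmt0 (v w : ℝ) (hv : v ∈ Set.Icc (0:ℝ) 1) (hw : w ∈ Set.Icc (0:ℝ) 1) :
    (∀ F Q : ℝ → ℝ → ℝ, IsBoundaryPair F Q → Q w v ≤ 0) ↔
      (w = v ∨ w ∈ Set.Icc (1 - min (1/2) v) 1) := by
  rw [forall_isBoundaryPair_flux_nonpos_iff hv hw, forall_mem_uIcc_quadraticFlux_iff, mem_Icc,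
    and_iff_left hw.2]
end

section
/- Let f : [0,1] → ℝ be twice continuously differentiable and convex (f'' ≥ 0), let v ∈ [0,1] satisfy f(v) = f'(v) = 0, and define q(u) = ∫_v^u (1−2w) f'(w) dw. Then: (a) if v ≥ 1/2 and u ∈ [1/2, 1], then q(u) ≤ 0; (b) if v ≤ 1/2 and u ∈ [1−v, 1], then q(u) ≤ 0. -/
open Set intervalIntegral

/-!
On `[1/2, 1]` the flux `J(u) = u (1 - u)` decreases while `f'` increases through `0` at `v`, so the
integrand `(1 - 2w) f'(w)` has the sign opposite to that of `w - v`, which gives (a). For (b),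
`w ↦ 1 - 2w` is decreasing and vanishes at `1/2`, so replacing `f'(w)` by `f'(1/2)` can only enlarge
the integrand. Hence `q(u) ≤ (J(u) - J(v)) f'(1/2)`, where `f'(1/2) ≥ 0`, and `J(u) ≤ J(v)` once
`u ≥ 1 - v`.
-/

section

variable {φ g : ℝ → ℝ} {a b c : ℝ} {μ : MeasureTheory.Measure ℝ}

lemma integral_mul_nonpos_of_nonpos_of_monotoneOn (hφ : ∀ w ∈ uIcc a b, φ w ≤ 0)
    (hg : MonotoneOn g (uIcc a b)) (hga : g a = 0) : ∫ w in a..b, φ w * g w ∂μ ≤ 0 := by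
  rcases le_total a b with hab | hba
  · rw [← neg_nonneg, ← integral_neg]
    refine integral_nonneg hab fun w hw => ?_
    have hw' : w ∈ uIcc a b := Icc_subset_uIcc hw
    have hgw : 0 ≤ g w := hga ▸ hg left_mem_uIcc hw' hw.1
    exact neg_nonneg.2 (mul_nonpos_of_nonpos_of_nonneg (hφ w hw') hgw)
  · rw [integral_symm, neg_nonpos]
    refine integral_nonneg hba fun w hw => ?_
    have hw' : w ∈ uIcc a b := Icc_subset_uIcc' hw
    have hgw : g w ≤ 0 := hga ▸ hg hw' left_mem_uIcc hw.2
    exact mul_nonneg_of_nonpos_of_nonpos (hφ w hw') hgw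

lemma integral_mul_le_integral_mul_of_antivaryOn (hab : a ≤ b) (hc : c ∈ Icc a b)
    (hφg : AntivaryOn φ g (Icc a b)) (hφc : φ c = 0) (hφ_int : IntervalIntegrable φ μ a b)
    (hφg_int : IntervalIntegrable (fun w => φ w * g w) μ a b) :
    ∫ w in a..b, φ w * g w ∂μ ≤ (∫ w in a..b, φ w ∂μ) * g c := by
  rw [← integral_mul_const]
  refine integral_mono_on hab hφg_int (hφ_int.mul_const _) fun w hw => ?_
  have hprod : (φ w - φ c) * (g w - g c) ≤ 0 := hφg.sub_mul_sub_nonpos hc hw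
  rwa [hφc, sub_zero, mul_sub, sub_nonpos] at hprod

end

lemma integral_one_sub_two_mul (a b : ℝ) :
    ∫ w in a..b, (1 - 2 * w) = b * (1 - b) - a * (1 - a) := by
  rw [integral_sub (by simp) (Continuous.intervalIntegrable (by fun_prop) _ _),
    integral_const_mul, integral_id, integral_one]
  ring

lemma integral_one_sub_two_mul_mul_le {g : ℝ → ℝ} {a b : ℝ} (hg : MonotoneOn g (Icc a b))
    (hhalf : 1 / 2 ∈ Icc a b) :
    ∫ w in a..b, (1 - 2 * w) * g w ≤ (b * (1 - b) - a * (1 - a)) * g (1 / 2) := by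
  have hab : a ≤ b := hhalf.1.trans hhalf.2
  have hanti : AntitoneOn (fun w : ℝ => 1 - 2 * w) (Icc a b) := fun x _ y _ hxy => by
    dsimp only
    linarith
  have hcont : Continuous fun w : ℝ => 1 - 2 * w := by fun_prop
  have hg_int : IntervalIntegrable g MeasureTheory.volume a b :=
    MonotoneOn.intervalIntegrable (by rwa [uIcc_of_le hab])
  rw [← integral_one_sub_two_mul]
  exact integral_mul_le_integral_mul_of_antivaryOn hab hhalf (hanti.antivaryOn hg) (by norm_num)
    (hcont.intervalIntegrable a b) (hg_int.continuousOn_mul hcont.continuousOn)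

-- `g` stands for `f'`, or for any monotone selection of subgradients of a convex `f`, which includes
-- entropies with a kink such as `|u - v|`.
theorem stmt2_general {g : ℝ → ℝ} (hg : MonotoneOn g (Icc 0 1)) {v : ℝ} (hv : v ∈ Icc (0 : ℝ) 1)
    (hgv : g v = 0) {q : ℝ → ℝ} (hq : ∀ u, q u = ∫ w in v..u, (1 - 2 * w) * g w) :
    (1 / 2 ≤ v → ∀ u ∈ Icc (1 / 2) 1, q u ≤ 0) ∧ (v ≤ 1 / 2 → ∀ u ∈ Icc (1 - v) 1, q u ≤ 0) := by
  refine ⟨fun hv_half u hu => ?_, fun hv_half u hu => ?_⟩ <;> rw [hq]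
  · have hsub : uIcc v u ⊆ Icc (1 / 2) 1 := uIcc_subset_Icc ⟨hv_half, hv.2⟩ hu
    refine integral_mul_nonpos_of_nonpos_of_monotoneOn (fun w hw => ?_)
      (hg.mono (hsub.trans (Icc_subset_Icc_left (by norm_num)))) hgv
    linarith [(hsub hw).1]
  · have hhalf : 1 / 2 ∈ Icc v u := ⟨hv_half, by linarith [hu.1]⟩
    have hg_half : 0 ≤ g (1 / 2) := hgv ▸ hg hv (by norm_num) hv_half
    have hflux : u * (1 - u) - v * (1 - v) ≤ 0 := by
      nlinarith [hu.1, hhalf.1.trans hhalf.2]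
    exact (integral_one_sub_two_mul_mul_le (hg.mono (Icc_subset_Icc hv.1 hu.2)) hhalf).trans
      (mul_nonpos_of_nonpos_of_nonneg hflux hg_half)

/-- Key computation in the proof of the 'if' direction of Proposition 2.4.
`f` plays the role of a boundary entropy `u ↦ ℱ(u,v)` and
`q u = ∫_v^u (1-2w) f'(w) dw` the associated boundary entropy flux for
`J u = u (1-u)`. -/
theorem stmt2 (f : ℝ → ℝ) (hf : ContDiff ℝ 2 f)
    (hconv : ∀ u ∈ Set.Icc (0:ℝ) 1, 0 ≤ deriv (deriv f) u)
    (v : ℝ) (hv : v ∈ Set.Icc (0:ℝ) 1) (hfv : f v = 0) (hf'v : deriv f v = 0)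
    (q : ℝ → ℝ) (hq : ∀ u, q u = ∫ w in v..u, (1 - 2*w) * deriv f w) :
    ((1/2 : ℝ) ≤ v → ∀ u ∈ Set.Icc (1/2 : ℝ) 1, q u ≤ 0) ∧
    (v ≤ (1/2 : ℝ) → ∀ u ∈ Set.Icc (1 - v) 1, q u ≤ 0) :=
  have hf' : Differentiable ℝ (deriv f) := hf.differentiable_deriv_two
  stmt2_general (monotoneOn_of_deriv_nonneg (convex_Icc 0 1) hf'.continuous.continuousOn
    hf'.differentiableOn fun u hu => hconv u (interior_subset hu)) hv hf'v hq
end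

section
/- Fix p > 0 and F ∈ C^∞(ℝ) with F(u) = |u| for all |u| > 1, F'(0) = 0, and F''(u) ≥ 0 for all u ∈ ℝ. For m ∈ ℕ and c ∈ ℚ define F_{m,c}(u) = m^{−1} F(m(u−c)) and Q_{m,c}(u) = ∫_c^u (1−2w) F'(m(w−c)) dw for u ∈ [0,1]. Let u ∈ L^∞((0,∞)×(0,1)) with 0 ≤ u ≤ 1 almost everywhere. If for every m ∈ ℕ, every c ∈ ℚ and every nonnegative ψ ∈ C_c^∞((0,∞)×(0,1)) one has ∫∫ [F_{m,c}(u) ∂_t ψ + p Q_{m,c}(u) ∂_x ψ] dx dt ≥ 0, then the same inequality ∫∫ [F(u) ∂_t ψ + p Q(u) ∂_x ψ] dx dt ≥ 0 holds for every Lax entropy flux pair (F, Q) and every nonnegative ψ ∈ C_c^∞((0,∞)×(0,1)). -/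
open Set MeasureTheory intervalIntegral

/-- The domain `(0,∞) × (0,1)`. -/
def Dom : Set (ℝ × ℝ) := Set.Ioi (0:ℝ) ×ˢ Set.Ioo (0:ℝ) 1

/-- A nonnegative smooth test function compactly supported in `(0,∞) × (0,1)`. -/
def IsTest (ψ : ℝ × ℝ → ℝ) : Prop :=
  ContDiff ℝ (⊤ : ℕ∞) ψ ∧ HasCompactSupport ψ ∧ tsupport ψ ⊆ Dom ∧ ∀ z, 0 ≤ ψ z

/-- The distributional entropy production
`∫∫ [F(u) ∂_t ψ + p Q(u) ∂_x ψ] dx dt` over `(0,∞) × (0,1)`. -/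
noncomputable def entProd (p : ℝ) (F Q : ℝ → ℝ) (u : ℝ × ℝ → ℝ) (ψ : ℝ × ℝ → ℝ) : ℝ :=
  ∫ z in Dom, (F (u z) * fderiv ℝ ψ z (1, 0) + p * Q (u z) * fderiv ℝ ψ z (0, 1))

open Filter Topology

/-!
By the layer cake formula, the entropy production of a pair with `F' = f` and `Q' = j f` depends on
`f` alone: it is `∫ f(s) χ(s) ds` over `[0,1]`, where `χ(s)` is the integral of
`∂_t ψ + p j(s) ∂_x ψ` over `{s ≤ u}`. Constants in `F` and `Q` do not contribute, because the
derivatives of `ψ` have mean zero. For the rescaled family `f(s) = F'(m (s - c))` is a smoothed sign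
of `s - c`; by continuity its inequality holds for real `c`, and `m → ∞` turns it into
`∫_{s ≥ c} χ ≥ ∫_{s < c} χ`. Choosing `c` to the left and to the right of `[0,1]` gives `∫ χ = 0`,
hence `∫_{s ≥ c} χ ≥ 0` for every `c`. A second use of the layer cake formula yields
`∫ f χ = ∫ f'(c) (∫_{s ≥ c} χ) dc ≥ 0` for every nondecreasing `f`.
-/

section Superlevel

variable {X : Type*} {u a : X → ℝ} {F f : ℝ → ℝ} {α β : ℝ}

/-- The integrand `𝟙_{s ≤ u z} a z f s` of the layer cake formula: Fubini's theorem for it exchanges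
the entropy derivative `f` at the level `s` with the weight `a` at the point `z`. -/
noncomputable def superlevelKernel (u a : X → ℝ) (f : ℝ → ℝ) : X × ℝ → ℝ :=
  {q | q.2 ≤ u q.1}.indicator fun q => a q.1 * f q.2

theorem setIntegral_indicator_Iic_eq_sub (hF : ∀ s ∈ Icc α β, HasDerivAt F (f s) s)
    (hf : IntegrableOn f (Ioc α β)) {w : ℝ} (hw : w ∈ Icc α β) :
    ∫ s in Ioc α β, (Iic w).indicator f s = F w - F α := by
  have hf_w : IntegrableOn f (Ioc α w) := hf.mono_set (Ioc_subset_Ioc_right hw.2)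
  rw [setIntegral_indicator measurableSet_Iic, Ioc_inter_Iic, min_eq_right hw.2,
    ← integral_of_le hw.1, integral_eq_sub_of_hasDerivAt _
      ((intervalIntegrable_iff_integrableOn_Ioc_of_le hw.1).2 hf_w)]
  rw [uIcc_of_le hw.1]
  exact fun s hs => hF s ⟨hs.1, hs.2.trans hw.2⟩

theorem integral_superlevelKernel_right (hF : ∀ s ∈ Icc α β, HasDerivAt F (f s) s)
    (hf : IntegrableOn f (Ioc α β)) {z : X} (hz : u z ∈ Icc α β) :
    ∫ s in Ioc α β, superlevelKernel u a f (z, s) = a z * (F (u z) - F α) := by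
  rw [← setIntegral_indicator_Iic_eq_sub hF hf hz, ← MeasureTheory.integral_const_mul]
  congr 1 with s
  simp only [superlevelKernel, indicator_apply, mem_ofPred_eq, mem_Iic, mul_ite, mul_zero]

variable [MeasurableSpace X] {κ : Measure X}

/-- The integral of `a` over the superlevel set `{s ≤ u}`. With `a` a derivative of a test function
this is the level-`s` part of the corresponding weak derivative of `u`. -/
noncomputable def superlevelIntegral (κ : Measure X) (u a : X → ℝ) (s : ℝ) : ℝ :=
  ∫ z in {z | s ≤ u z}, a z ∂κ

theorem integral_superlevelKernel_left (hu : AEMeasurable u κ) (s : ℝ) :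
    ∫ z, superlevelKernel u a f (z, s) ∂κ = f s * superlevelIntegral κ u a s := by
  have hs : NullMeasurableSet {z | s ≤ u z} κ := nullMeasurableSet_le aemeasurable_const hu
  rw [superlevelIntegral, mul_comm, ← MeasureTheory.integral_mul_const, ← integral_indicator₀ hs]
  rfl

theorem integrable_superlevelKernel {ν : Measure ℝ} [SFinite ν] (hu : AEMeasurable u κ)
    (ha : Integrable a κ) (hf : Integrable f ν) :
    Integrable (superlevelKernel u a f) (κ.prod ν) :=
  (ha.mul_prod hf).indicator₀ (nullMeasurableSet_le measurable_snd.aemeasurable hu.comp_fst)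

theorem integrable_mul_comp (hu : AEMeasurable u κ) (hub : ∀ᵐ z ∂κ, u z ∈ Icc α β)
    (ha : Integrable a κ) (hF : ∀ s ∈ Icc α β, HasDerivAt F (f s) s)
    (hf : IntegrableOn f (Ioc α β)) : Integrable (fun z => a z * F (u z)) κ := by
  refine ((integrable_superlevelKernel hu ha hf).integral_prod_left.add
    (ha.mul_const (F α))).congr ?_
  filter_upwards [hub] with z hz
  rw [Pi.add_apply, integral_superlevelKernel_right hF hf hz]
  ring

variable [SFinite κ]

theorem integrable_mul_superlevelIntegral {ν : Measure ℝ} [SFinite ν] (hu : AEMeasurable u κ)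
    (ha : Integrable a κ) (hf : Integrable f ν) :
    Integrable (fun s => f s * superlevelIntegral κ u a s) ν := by
  simpa only [integral_superlevelKernel_left hu] using
    (integrable_superlevelKernel hu ha hf).integral_prod_right

theorem integral_mul_comp_eq_setIntegral_mul_superlevelIntegral (hu : AEMeasurable u κ)
    (hub : ∀ᵐ z ∂κ, u z ∈ Icc α β) (ha : Integrable a κ) (ha_zero : ∫ z, a z ∂κ = 0)
    (hF : ∀ s ∈ Icc α β, HasDerivAt F (f s) s) (hf : IntegrableOn f (Ioc α β)) :
    ∫ z, a z * F (u z) ∂κ = ∫ s in Ioc α β, f s * superlevelIntegral κ u a s := by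
  calc ∫ z, a z * F (u z) ∂κ = ∫ z, a z * (F (u z) - F α) ∂κ := by
        simp only [mul_sub]
        rw [integral_sub (integrable_mul_comp hu hub ha hF hf) (ha.mul_const _),
          MeasureTheory.integral_mul_const, ha_zero, zero_mul, sub_zero]
    _ = ∫ z, (∫ s in Ioc α β, superlevelKernel u a f (z, s)) ∂κ := by
        refine integral_congr_ae ?_
        filter_upwards [hub] with z hz
        exact (integral_superlevelKernel_right hF hf hz).symm
    _ = ∫ s in Ioc α β, (∫ z, superlevelKernel u a f (z, s) ∂κ) :=
        integral_integral_swap (f := fun z s => superlevelKernel u a f (z, s))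
          (integrable_superlevelKernel hu ha hf)
    _ = ∫ s in Ioc α β, f s * superlevelIntegral κ u a s := by
        simp only [integral_superlevelKernel_left hu]

end Superlevel

section Rescaling

variable {μ : Measure ℝ} {φ g : ℝ → ℝ} {l L : ℝ}

theorem exists_norm_le_of_tendsto_atBot_atTop (hφ : Continuous φ) (hbot : Tendsto φ atBot (𝓝 l))
    (htop : Tendsto φ atTop (𝓝 L)) : ∃ K, ∀ y, ‖φ y‖ ≤ K := by
  obtain ⟨s, hs, hφs⟩ := Metric.exists_isBounded_image_of_tendsto hbot
  obtain ⟨t, ht, hφt⟩ := Metric.exists_isBounded_image_of_tendsto htop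
  have hst : s ∪ t ∈ cocompact ℝ := by
    rw [cocompact_eq_atBot_atTop]
    exact union_mem_sup hs ht
  obtain ⟨k, hk, hkst⟩ := mem_cocompact.1 hst
  obtain ⟨K, hK⟩ := ((hφs.union hφt).union (hk.image hφ).isBounded).exists_norm_le
  refine ⟨K, fun y => hK _ ?_⟩
  rw [← image_union, ← image_union]
  exact mem_image_of_mem φ ((em (y ∈ k)).elim Or.inr fun hy => Or.inl (hkst hy))

theorem continuous_integral_comp_mul_sub_mul (hφ : Continuous φ)
    (hbot : Tendsto φ atBot (𝓝 l)) (htop : Tendsto φ atTop (𝓝 L)) (hg : Integrable g μ) (m : ℝ) :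
    Continuous fun c => ∫ s, φ (m * (s - c)) * g s ∂μ := by
  obtain ⟨K, hK⟩ := exists_norm_le_of_tendsto_atBot_atTop hφ hbot htop
  refine continuous_of_dominated (bound := fun s => K * ‖g s‖) (fun c => ?_) (fun c => ?_)
    (hg.norm.const_mul K) (Eventually.of_forall fun s => by fun_prop)
  · exact (by fun_prop : Continuous fun s => φ (m * (s - c))).aestronglyMeasurable.mul hg.1
  · exact Eventually.of_forall fun s => (norm_mul_le _ _).trans <| by gcongr; exact hK _

theorem tendsto_integral_comp_mul_sub_mul [NullSingletonClass μ] (hφ : Continuous φ)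
    (hbot : Tendsto φ atBot (𝓝 l)) (htop : Tendsto φ atTop (𝓝 L)) (hg : Integrable g μ) (c : ℝ) :
    Tendsto (fun m => ∫ s, φ (m * (s - c)) * g s ∂μ) atTop
      (𝓝 (L * ∫ s in Ici c, g s ∂μ + l * ∫ s in Iio c, g s ∂μ)) := by
  classical
  obtain ⟨K, hK⟩ := exists_norm_le_of_tendsto_atBot_atTop hφ hbot htop
  have hlim : ∀ s ≠ c, Tendsto (fun m => φ (m * (s - c)) * g s) atTop
      (𝓝 ((Ici c).piecewise (fun s => L * g s) (fun s => l * g s) s)) := by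
    intro s hs
    rcases hs.lt_or_gt with hsc | hcs
    · rw [piecewise_eq_of_notMem _ _ _ (notMem_Ici.2 hsc)]
      exact (hbot.comp (tendsto_id.atTop_mul_const_of_neg (sub_neg.2 hsc))).mul_const _
    · rw [piecewise_eq_of_mem _ _ _ (mem_Ici.2 hcs.le)]
      exact (htop.comp (tendsto_id.atTop_mul_const (sub_pos.2 hcs))).mul_const _
  rw [← MeasureTheory.integral_const_mul, ← MeasureTheory.integral_const_mul, ← compl_Ici,
    ← integral_piecewise measurableSet_Ici (hg.const_mul L).integrableOn
      (hg.const_mul l).integrableOn]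
  refine tendsto_integral_filter_of_dominated_convergence (fun s => K * ‖g s‖)
    (Eventually.of_forall fun m => ?_) (Eventually.of_forall fun m => ?_) (hg.norm.const_mul K) ?_
  · exact (by fun_prop : Continuous fun s => φ (m * (s - c))).aestronglyMeasurable.mul hg.1
  · exact Eventually.of_forall fun s => (norm_mul_le _ _).trans <| by gcongr; exact hK _
  · filter_upwards [compl_mem_ae_iff.2 (measure_singleton (μ := μ) c)] with s hs using hlim s hs

theorem setIntegral_Ici_add_setIntegral_Iio_nonneg [NullSingletonClass μ] (hφ : Continuous φ)
    (hbot : Tendsto φ atBot (𝓝 l)) (htop : Tendsto φ atTop (𝓝 L)) (hg : Integrable g μ)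
    (H : ∀ m : ℕ, 0 < m → ∀ c : ℚ, 0 ≤ ∫ s, φ (m * (s - c)) * g s ∂μ) (c : ℝ) :
    0 ≤ L * ∫ s in Ici c, g s ∂μ + l * ∫ s in Iio c, g s ∂μ := by
  have H_real : ∀ m : ℕ, 0 < m → ∀ c : ℝ, 0 ≤ ∫ s, φ (m * (s - c)) * g s ∂μ := fun m hm c =>
    Rat.denseRange_cast.induction_on c
      (isClosed_le continuous_const (continuous_integral_comp_mul_sub_mul hφ hbot htop hg m))
      (H m hm)
  refine ge_of_tendsto ((tendsto_integral_comp_mul_sub_mul hφ hbot htop hg c).comp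
    tendsto_natCast_atTop_atTop) ?_
  filter_upwards [eventually_gt_atTop 0] with m hm using H_real m hm c

theorem setIntegral_Ici_add_setIntegral_Iio (hg : Integrable g μ) (c : ℝ) :
    ∫ s in Ici c, g s ∂μ + ∫ s in Iio c, g s ∂μ = ∫ s, g s ∂μ := by
  rw [← compl_Ici, integral_add_compl measurableSet_Ici hg]

theorem integral_eq_zero_of_forall_Ici_add_Iio_nonneg {α β : ℝ} (hμ : ∀ᵐ s ∂μ, s ∈ Icc α β)
    (hg : Integrable g μ) (hl : l < 0) (hL : 0 < L)
    (H : ∀ c, 0 ≤ L * ∫ s in Ici c, g s ∂μ + l * ∫ s in Iio c, g s ∂μ) : ∫ s, g s ∂μ = 0 := by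
  have h_left : ∫ s in Iio α, g s ∂μ = 0 := setIntegral_measure_zero g <|
    measure_eq_zero_iff_ae_notMem.2 <| hμ.mono fun s hs => notMem_Iio.2 hs.1
  have h_right : ∫ s in Ici (β + 1), g s ∂μ = 0 := setIntegral_measure_zero g <|
    measure_eq_zero_iff_ae_notMem.2 <| hμ.mono fun s hs => notMem_Ici.2 (by linarith [hs.2])
  have hL_mul : 0 ≤ L * ∫ s, g s ∂μ := by
    simpa only [← setIntegral_Ici_add_setIntegral_Iio hg α, h_left, mul_zero, add_zero] using H α
  have hl_mul : 0 ≤ l * ∫ s, g s ∂μ := by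
    simpa only [← setIntegral_Ici_add_setIntegral_Iio hg (β + 1), h_right, mul_zero, zero_add]
      using H (β + 1)
  exact le_antisymm (nonpos_of_mul_nonneg_right hl_mul hl) (nonneg_of_mul_nonneg_right hL_mul hL)

theorem setIntegral_Ici_nonneg_of_integral_eq_zero (hg : Integrable g μ) (hlL : l < L)
    (hg_zero : ∫ s, g s ∂μ = 0) {c : ℝ}
    (hc : 0 ≤ L * ∫ s in Ici c, g s ∂μ + l * ∫ s in Iio c, g s ∂μ) :
    0 ≤ ∫ s in Ici c, g s ∂μ := by
  have hsplit := setIntegral_Ici_add_setIntegral_Iio hg c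
  rw [hg_zero] at hsplit
  have h_mul : 0 ≤ (L - l) * ∫ s in Ici c, g s ∂μ := by
    linear_combination hc + l * hsplit
  exact nonneg_of_mul_nonneg_right h_mul (sub_pos.2 hlL)

theorem integral_mul_nonneg_of_forall_rescale [SFinite μ] [NullSingletonClass μ] {α β : ℝ}
    (hμ : ∀ᵐ s ∂μ, s ∈ Icc α β) (hφ : Continuous φ) (hl : l < 0) (hL : 0 < L)
    (hbot : Tendsto φ atBot (𝓝 l)) (htop : Tendsto φ atTop (𝓝 L)) (hg : Integrable g μ)
    (H : ∀ m : ℕ, 0 < m → ∀ c : ℚ, 0 ≤ ∫ s, φ (m * (s - c)) * g s ∂μ) {f f' : ℝ → ℝ}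
    (hff' : ∀ s ∈ Icc α β, HasDerivAt f (f' s) s) (hf' : IntegrableOn f' (Ioc α β))
    (hf'_nonneg : ∀ s ∈ Icc α β, 0 ≤ f' s) : 0 ≤ ∫ s, f s * g s ∂μ := by
  have H_lim := setIntegral_Ici_add_setIntegral_Iio_nonneg hφ hbot htop hg H
  have hg_zero : ∫ s, g s ∂μ = 0 := integral_eq_zero_of_forall_Ici_add_Iio_nonneg hμ hg hl hL H_lim
  have hg_nonneg : ∀ c, 0 ≤ superlevelIntegral μ id g c := fun c =>
    setIntegral_Ici_nonneg_of_integral_eq_zero hg (hl.trans hL) hg_zero (H_lim c)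
  calc 0 ≤ ∫ c in Ioc α β, f' c * superlevelIntegral μ id g c :=
        setIntegral_nonneg measurableSet_Ioc fun c hc =>
          mul_nonneg (hf'_nonneg c (Ioc_subset_Icc_self hc)) (hg_nonneg c)
    _ = ∫ s, f s * g s ∂μ := by
        rw [← integral_mul_comp_eq_setIntegral_mul_superlevelIntegral aemeasurable_id hμ hg hg_zero
          hff' hf']
        simp only [id, mul_comm]

end Rescaling

section TestFunction

variable {E : Type*} [NormedAddCommGroup E] [NormedSpace ℝ E] {ψ : E → ℝ}

theorem integrable_fderiv_apply_of_hasCompactSupport [MeasurableSpace E] [OpensMeasurableSpace E]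
    {μ : Measure E} [IsFiniteMeasureOnCompacts μ] (hψ : ContDiff ℝ 1 ψ)
    (hψc : HasCompactSupport ψ) (v : E) : Integrable (fun z => fderiv ℝ ψ z v) μ :=
  ((hψ.continuous_fderiv one_ne_zero).clm_apply continuous_const).integrable_of_hasCompactSupport
    (hψc.fderiv_apply ℝ v)

theorem integral_fderiv_apply_eq_zero_of_hasCompactSupport [FiniteDimensional ℝ E]
    [MeasurableSpace E] [BorelSpace E] {μ : Measure E} [μ.IsAddHaarMeasure] (hψ : ContDiff ℝ 1 ψ)
    (hψc : HasCompactSupport ψ) (v : E) : ∫ z, fderiv ℝ ψ z v ∂μ = 0 := by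
  have h_parts := integral_mul_fderiv_eq_neg_fderiv_mul_of_integrable (μ := μ)
    (f := fun _ => (1 : ℝ)) (g := ψ) (v := v) (by simp)
    (by simpa using integrable_fderiv_apply_of_hasCompactSupport hψ hψc v)
    (by simpa using hψ.continuous.integrable_of_hasCompactSupport hψc)
    (fun _ _ => differentiableAt_const _) (fun z _ => hψ.differentiable one_ne_zero z)
  simpa using h_parts

theorem setIntegral_fderiv_apply_eq_integral [MeasurableSpace E] {μ : Measure E} {s : Set E}
    (hs : tsupport ψ ⊆ s) (v : E) :
    ∫ z in s, fderiv ℝ ψ z v ∂μ = ∫ z, fderiv ℝ ψ z v ∂μ := by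
  refine setIntegral_eq_integral_of_forall_compl_eq_zero fun z hz => ?_
  rw [fderiv_of_notMem_tsupport ℝ fun h => hz (hs h), zero_apply]

end TestFunction

section EntropyProduction

variable {p : ℝ} {j F Q f : ℝ → ℝ} {u ψ : ℝ × ℝ → ℝ}

/-- The kinetic entropy production of `∂_t u + p ∂_x J(u) = 0`, `J' = j`, at the level `s`: the
integral of `∂_t ψ + p j(s) ∂_x ψ` over the part of the domain where `s ≤ u`. Weighting it with `F'`
and integrating over `s` gives `entProd p F Q u ψ`. -/
noncomputable def kineticProd (p : ℝ) (j : ℝ → ℝ) (u ψ : ℝ × ℝ → ℝ) (s : ℝ) : ℝ :=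
  superlevelIntegral (volume.restrict Dom) u (fun z => fderiv ℝ ψ z (1, 0)) s +
    p * j s * superlevelIntegral (volume.restrict Dom) u (fun z => fderiv ℝ ψ z (0, 1)) s

theorem integrableOn_kineticProd (hj : Continuous j)
    (hu : AEMeasurable u (volume.restrict Dom)) (hψ : ContDiff ℝ 1 ψ)
    (hψc : HasCompactSupport ψ) (α β : ℝ) : IntegrableOn (kineticProd p j u ψ) (Ioc α β) := by
  have hdψ := integrable_fderiv_apply_of_hasCompactSupport (μ := volume.restrict Dom) hψ hψc
  have ht := integrable_mul_superlevelIntegral (ν := volume.restrict (Ioc α β)) hu (hdψ (1, 0))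
    (continuous_const (y := (1 : ℝ))).integrableOn_Ioc
  have hx := integrable_mul_superlevelIntegral (ν := volume.restrict (Ioc α β)) hu (hdψ (0, 1))
    (continuous_const.mul hj : Continuous fun s => p * j s).integrableOn_Ioc
  refine (ht.add hx).congr (Eventually.of_forall fun s => ?_)
  simp only [Pi.add_apply, Pi.mul_apply, one_mul, kineticProd]

theorem entProd_eq_setIntegral_mul_kineticProd (hu : AEMeasurable u (volume.restrict Dom))
    (hub : ∀ᵐ z ∂(volume.restrict Dom), u z ∈ Icc (0 : ℝ) 1) (hψ : ContDiff ℝ 1 ψ)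
    (hψc : HasCompactSupport ψ) (hψDom : tsupport ψ ⊆ Dom)
    (hF : ∀ s ∈ Icc (0 : ℝ) 1, HasDerivAt F (f s) s)
    (hQ : ∀ s ∈ Icc (0 : ℝ) 1, HasDerivAt Q (j s * f s) s)
    (hf : IntegrableOn f (Ioc 0 1)) (hjf : IntegrableOn (fun s => j s * f s) (Ioc 0 1)) :
    entProd p F Q u ψ = ∫ s in Ioc 0 1, f s * kineticProd p j u ψ s := by
  have hdψ := integrable_fderiv_apply_of_hasCompactSupport (μ := volume.restrict Dom) hψ hψc
  have hdψ0 : ∀ v, ∫ z in Dom, fderiv ℝ ψ z v = 0 := fun v => by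
    rw [setIntegral_fderiv_apply_eq_integral hψDom,
      integral_fderiv_apply_eq_zero_of_hasCompactSupport hψ hψc]
  calc entProd p F Q u ψ
      = ∫ z in Dom, (fderiv ℝ ψ z (1, 0) * F (u z) + p * (fderiv ℝ ψ z (0, 1) * Q (u z))) := by
        unfold entProd
        congr 1 with z
        ring
    _ = (∫ z in Dom, fderiv ℝ ψ z (1, 0) * F (u z)) +
          p * ∫ z in Dom, fderiv ℝ ψ z (0, 1) * Q (u z) := by
        rw [integral_add (integrable_mul_comp hu hub (hdψ _) hF hf)
          ((integrable_mul_comp hu hub (hdψ _) hQ hjf).const_mul p),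
          MeasureTheory.integral_const_mul]
    _ = ∫ s in Ioc 0 1, f s * kineticProd p j u ψ s := by
        rw [integral_mul_comp_eq_setIntegral_mul_superlevelIntegral hu hub (hdψ _) (hdψ0 _) hF hf,
          integral_mul_comp_eq_setIntegral_mul_superlevelIntegral hu hub (hdψ _) (hdψ0 _) hQ hjf,
          ← MeasureTheory.integral_const_mul,
          ← integral_add (integrable_mul_superlevelIntegral hu (hdψ _) hf)
            ((integrable_mul_superlevelIntegral hu (hdψ _) hjf).const_mul p)]
        congr 1 with s
        rw [kineticProd]
        ring

theorem hasDerivAt_inv_mul_comp_mul_sub (hF : Differentiable ℝ F) {m : ℝ} (hm : m ≠ 0) (c w : ℝ) :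
    HasDerivAt (fun w => m⁻¹ * F (m * (w - c))) (deriv F (m * (w - c))) w := by
  have h_inner : HasDerivAt (fun w => m * (w - c)) m w := by
    simpa using ((hasDerivAt_id w).sub_const c).const_mul m
  refine (((hF _).hasDerivAt.comp w h_inner).const_mul m⁻¹).congr_deriv ?_
  field_simp

theorem entProd_rescale_eq_setIntegral (hj : Continuous j) (hF : ContDiff ℝ 1 F)
    (hu : AEMeasurable u (volume.restrict Dom))
    (hub : ∀ᵐ z ∂(volume.restrict Dom), u z ∈ Icc (0 : ℝ) 1) (hψ : ContDiff ℝ 1 ψ)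
    (hψc : HasCompactSupport ψ) (hψDom : tsupport ψ ⊆ Dom) {m : ℝ} (hm : m ≠ 0) (c : ℝ) :
    entProd p (fun w => m⁻¹ * F (m * (w - c))) (fun w => ∫ s in c..w, j s * deriv F (m * (s - c)))
      u ψ = ∫ s in Ioc 0 1, deriv F (m * (s - c)) * kineticProd p j u ψ s := by
  have hF' : Continuous fun s => deriv F (m * (s - c)) :=
    (hF.continuous_deriv le_rfl).comp (by fun_prop)
  have hjF' := hj.mul hF'
  exact entProd_eq_setIntegral_mul_kineticProd (f := fun s => deriv F (m * (s - c)))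
    hu hub hψ hψc hψDom
    (fun w _ => hasDerivAt_inv_mul_comp_mul_sub (hF.differentiable one_ne_zero) hm c w)
    (fun w _ => hjF'.integral_hasStrictDerivAt c w |>.hasDerivAt)
    hF'.integrableOn_Ioc hjF'.integrableOn_Ioc

end EntropyProduction

theorem tendsto_deriv_atTop_of_eq_abs {F : ℝ → ℝ} (hF : ∀ u : ℝ, 1 < |u| → F u = |u|) :
    Tendsto (deriv F) atTop (𝓝 1) := by
  refine tendsto_const_nhds.congr' ?_
  filter_upwards [eventually_gt_atTop 1] with u hu
  have h_eq : F =ᶠ[𝓝 u] id := by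
    filter_upwards [Ioi_mem_nhds hu] with w hw
    have hw1 : 1 < w := hw
    have hw_abs : |w| = w := abs_of_pos (by linarith)
    rw [hF w (hw_abs.symm ▸ hw1), hw_abs, id]
  rw [h_eq.deriv_eq, deriv_id]

theorem tendsto_deriv_atBot_of_eq_abs {F : ℝ → ℝ} (hF : ∀ u : ℝ, 1 < |u| → F u = |u|) :
    Tendsto (deriv F) atBot (𝓝 (-1)) := by
  have h_top := tendsto_deriv_atTop_of_eq_abs (F := fun u => F (-u)) fun u hu => by
    rw [hF (-u) (by rwa [abs_neg]), abs_neg]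
  have h_bot := (h_top.comp tendsto_neg_atBot_atTop).neg
  refine h_bot.congr fun u => ?_
  simp only [Function.comp_apply, deriv_comp_neg, neg_neg]

theorem stmt3_general (p : ℝ) {j : ℝ → ℝ} (hj : Continuous j) {F : ℝ → ℝ} (hF : ContDiff ℝ 1 F)
    {l L : ℝ} (hl : l < 0) (hL : 0 < L) (hbot : Tendsto (deriv F) atBot (𝓝 l))
    (htop : Tendsto (deriv F) atTop (𝓝 L)) {u ψ : ℝ × ℝ → ℝ}
    (hu : AEMeasurable u (volume.restrict Dom))
    (hub : ∀ᵐ z ∂(volume.restrict Dom), u z ∈ Icc (0 : ℝ) 1) (hψ : ContDiff ℝ 1 ψ)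
    (hψc : HasCompactSupport ψ) (hψDom : tsupport ψ ⊆ Dom)
    (H : ∀ m : ℕ, 0 < m → ∀ c : ℚ,
      0 ≤ entProd p (fun w => (m : ℝ)⁻¹ * F (m * (w - c)))
            (fun w => ∫ s in (c : ℝ)..w, j s * deriv F (m * (s - c))) u ψ)
    {G R : ℝ → ℝ} (hG : ContDiff ℝ 2 G) (hR : Differentiable ℝ R)
    (hGR : ∀ s ∈ Icc (0 : ℝ) 1, deriv R s = j s * deriv G s)
    (hconv : ∀ s ∈ Icc (0 : ℝ) 1, 0 ≤ deriv (deriv G) s) : 0 ≤ entProd p G R u ψ := by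
  have hG' : ContDiff ℝ 1 (deriv G) := hG.deriv' (n := 1)
  have h_entProd : entProd p G R u ψ = ∫ s in Ioc 0 1, deriv G s * kineticProd p j u ψ s :=
    entProd_eq_setIntegral_mul_kineticProd hu hub hψ hψc hψDom
      (fun s _ => (hG.differentiable two_ne_zero s).hasDerivAt)
      (fun s hs => hGR s hs ▸ (hR s).hasDerivAt)
      hG'.continuous.integrableOn_Ioc (hj.mul hG'.continuous).integrableOn_Ioc
  have H_kinetic : ∀ m : ℕ, 0 < m → ∀ c : ℚ,
      0 ≤ ∫ s in Ioc 0 1, deriv F (m * (s - c)) * kineticProd p j u ψ s := fun m hm c =>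
    (entProd_rescale_eq_setIntegral hj hF hu hub hψ hψc hψDom
      (Nat.cast_ne_zero.2 hm.ne') (c : ℝ)) ▸ H m hm c
  rw [h_entProd]
  exact integral_mul_nonneg_of_forall_rescale
    ((ae_restrict_mem measurableSet_Ioc).mono fun s hs => Ioc_subset_Icc_self hs)
    (hF.continuous_deriv le_rfl) hl hL hbot htop (integrableOn_kineticProd hj hu hψ hψc 0 1)
    H_kinetic (fun s _ => (hG'.differentiable one_ne_zero s).hasDerivAt)
    (hG'.continuous_deriv le_rfl).integrableOn_Ioc hconv

/-- Remark 2.2: the entropy inequality for the countable family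
`(F_{m,c}, Q_{m,c})`, `m ∈ ℕ`, `c ∈ ℚ`, implies it for all Lax entropy flux pairs. -/
theorem stmt3 (p : ℝ) (hp : 0 < p)
    (F : ℝ → ℝ) (hF : ContDiff ℝ (⊤ : ℕ∞) F)
    (hFabs : ∀ u : ℝ, 1 < |u| → F u = |u|)
    (hF0 : deriv F 0 = 0) (hFconv : ∀ u : ℝ, 0 ≤ deriv (deriv F) u)
    (u : ℝ × ℝ → ℝ) (hu : Measurable u)
    (hub : ∀ᵐ z ∂(volume.restrict Dom), u z ∈ Set.Icc (0:ℝ) 1)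
    (H : ∀ m : ℕ, 0 < m → ∀ c : ℚ, ∀ ψ : ℝ × ℝ → ℝ, IsTest ψ →
      0 ≤ entProd p (fun w => (m:ℝ)⁻¹ * F (m * (w - c)))
            (fun w => ∫ s in (c:ℝ)..w, (1 - 2*s) * deriv F (m * (s - c))) u ψ) :
    ∀ F' Q' : ℝ → ℝ, IsLaxPair F' Q' → ∀ ψ : ℝ × ℝ → ℝ, IsTest ψ →
      0 ≤ entProd p F' Q' u ψ := by
  rintro F' Q' ⟨hF', hQ', hflux, hconv⟩ ψ hψ
  exact stmt3_general p (by fun_prop : Continuous fun s : ℝ => 1 - 2 * s) (hF.of_le (by simp))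
    neg_one_lt_zero one_pos (tendsto_deriv_atBot_of_eq_abs hFabs)
    (tendsto_deriv_atTop_of_eq_abs hFabs) hu.aemeasurable hub (hψ.1.of_le (by simp)) hψ.2.1 hψ.2.2.1
    (fun m hm c => H m hm c ψ hψ) hF' (hQ'.differentiable two_ne_zero) hflux hconv
end
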